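/- arXiv:math/0407230 — 2 statements merged into one kernel-verified Lean document; each statement's English description precedes it below -/
import Mathlib

section
/- The dual Koszul complex of global sections is a resolution concentrated in top degree: (i) for 0 ≤ q < n, every ω ∈ Ǩ^q with d_Ǩ ω = 0 satisfies ω = d_Ǩ(P̌ ω) (in particular ω = 0 when q = 0); (ii) an element f ě¹ ∧ … ∧ ěⁿ ∈ Ǩⁿ lies in the image of d_Ǩ : Ǩ^{n−1} → Ǩⁿ if and only if f(z, z) = 0 for all z ∈ U; hence the augmented complex 0 → Ǩ^0 → Ǩ^1 → … → Ǩⁿ → O(U) → 0, with augmentation f ě¹ ∧ … ∧ ěⁿ ↦ (z ↦ f(z, z)), is exact. -/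
/-!
Setting: `n ≥ 1`, `U ⊆ ℂⁿ` a nonempty convex open set.  Points of `U × U` are
written `p = (z, ζ)` with `z = p.1`, `ζ = p.2`.  For `0 ≤ q ≤ n`,
`Ǩ^q = Λ^q((ℂⁿ)*) ⊗ O(U×U)` is encoded by the coefficients of its elements on
the basis `ě^I`, where the strictly increasing multi-indices
`I = (i₁ < … < i_q)` are encoded as finsets `I ⊆ Fin n` of cardinality `q`.
-/

open scoped BigOperators

namespace TwistedKoszulDual

variable (n : ℕ)

/-- Points of `ℂⁿ × ℂⁿ`. -/
abbrev Pt (n : ℕ) := (Fin n → ℂ) × (Fin n → ℂ)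

/-- A family of coefficients, indexed by the basis vectors `ě^I` of
`Λ^•((ℂⁿ)*)` (strictly increasing multi-indices `I`, encoded as finsets).
An element of `Ǩ^q` is such a family supported on finsets of cardinality `q`,
with holomorphic coefficients (see `MemK`). -/
abbrev Coeff (n : ℕ) := Finset (Fin n) → Pt n → ℂ

/-- The sign `(-1)^{#{i ∈ I | i < j}}`, so that `ě^j ∧ ě^I = sgn j I • ě^{I ∪ {j}}`
for `j ∉ I`, and `ι_{e_j} ě^I = sgn j (I \ {j}) • ě^{I \ {j}}` for `j ∈ I`. -/
noncomputable def sgn (j : Fin n) (I : Finset (Fin n)) : ℂ :=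
  (-1 : ℂ) ^ (I.filter (fun i => i < j)).card

/-- The holomorphic partial derivative `∂f/∂z^j` in the `j`-th coordinate of
the first factor. -/
noncomputable def pd (j : Fin n) (f : Pt n → ℂ) (p : Pt n) : ℂ :=
  fderiv ℂ f p (Pi.single j 1, 0)

/-- The dual Koszul differential `d_Ǩ : Ǩ^q → Ǩ^{q+1}`: exterior multiplication
by `Σ_i (z^i - ζ^i) ě^i`. -/
noncomputable def dKd (ω : Coeff n) : Coeff n := fun J p =>
  ∑ j ∈ J, sgn n j (J.erase j) * ((p.1 j - p.2 j) * ω (J.erase j) p)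

/-- The homotopy operator `P̌ : Ǩ^q → Ǩ^{q-1}`:
`P̌(f ě^I) = Σ_j (∫₀¹ t^{n-|I|} (∂f/∂z^j)(ζ + t(z - ζ), ζ) dt) ι_{e_j} ě^I`. -/
noncomputable def Pd (ω : Coeff n) : Coeff n := fun J p =>
  ∑ j ∈ Jᶜ, sgn n j J *
    ∫ t in (0:ℝ)..1, (t : ℂ) ^ (n - (J.card + 1)) *
      pd n j (ω (insert j J)) (p.2 + t • (p.1 - p.2), p.2)

/-- The operator `reš`: zero on `Ǩ^q` for `q ≠ n`, and
`reš(f ě^1 ∧ … ∧ ě^n)(z, ζ) = f(ζ, ζ) ě^1 ∧ … ∧ ě^n` on `Ǩ^n`. -/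
noncomputable def resd (ω : Coeff n) : Coeff n := fun J p =>
  if J = Finset.univ then ω Finset.univ (p.2, p.2) else 0

/-- `ω` is an element of `Ǩ^q` over `U × U`: it is supported on multi-indices
of length `q` and its coefficients are holomorphic on `U × U`. -/
def MemK (U : Set (Fin n → ℂ)) (q : ℕ) (ω : Coeff n) : Prop :=
  (∀ I : Finset (Fin n), I.card ≠ q → ω I = 0) ∧
  ∀ I : Finset (Fin n), DifferentiableOn ℂ (ω I) (U ×ˢ U)

end TwistedKoszulDual

namespace TwistedKoszulDual

section analysisPart

open Set Filter Topology MeasureTheory Metric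

theorem diff_param_integral {E : Type*} [NormedAddCommGroup E] [NormedSpace ℂ E]
    [FiniteDimensional ℂ E] {W : Set E} (hW : IsOpen W) {a b : ℝ} (hab : a ≤ b)
    (F : E → ℝ → ℂ) (hF : ∀ t ∈ Icc a b, DifferentiableOn ℂ (fun p => F p t) W)
    (hc : ContinuousOn (fun x : E × ℝ => F x.1 x.2) (W ×ˢ Icc a b)) :
    DifferentiableOn ℂ (fun p => ∫ t in a..b, F p t) W := by
  have : ProperSpace E := FiniteDimensional.proper ℂ E
  intro p0 hp0
  obtain ⟨R, hR, hRW⟩ := Metric.isOpen_iff.1 hW p0 hp0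
  set r := R / 4 with hr
  have hr0 : 0 < r := by positivity
  have hK : closedBall p0 (2 * r) ⊆ W := fun x hx => hRW (by
    simp only [mem_closedBall, mem_ball] at *; linarith)
  obtain ⟨M, hM⟩ := ((isCompact_closedBall p0 (2 * r)).prod (isCompact_Icc (a := a) (b := b))).exists_bound_of_continuousOn
    (hc.mono (prod_mono hK subset_rfl))
  have hcont : ∀ p ∈ W, ContinuousOn (F p) (Icc a b) := fun p hp =>
    hc.comp (f := fun t : ℝ => (p, t)) (by fun_prop) (fun t ht => ⟨hp, ht⟩)
  have hIoc : uIoc a b ⊆ Icc a b := by rw [uIoc_of_le hab]; exact Ioc_subset_Icc_self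
  have hmeas : ∀ p ∈ W, AEStronglyMeasurable (F p) (volume.restrict (uIoc a b)) := fun p hp =>
    ((hcont p hp).mono hIoc).aestronglyMeasurable measurableSet_uIoc
  have hdiff : ∀ t ∈ uIoc a b, ∀ p ∈ W,
      HasFDerivAt (fun p => F p t) (fderiv ℂ (fun p => F p t) p) p := fun t ht p hp =>
    ((hF t (hIoc ht)).differentiableAt (hW.mem_nhds hp)).hasFDerivAt
  have hmeas' : AEStronglyMeasurable (fun t => fderiv ℂ (fun p => F p t) p0)
      (volume.restrict (uIoc a b)) := by
    have hv : ∀ v : E, AEStronglyMeasurable (fun t => fderiv ℂ (fun p => F p t) p0 v)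
        (volume.restrict (uIoc a b)) := by
      intro v
      have hlim : Tendsto (fun c : ℝ => p0 + ((c : ℂ))⁻¹ • v) atTop (𝓝 p0) := by
        have h1 : Tendsto (fun c : ℝ => ((c : ℂ))⁻¹) atTop (𝓝 0) := by
          have := (Complex.continuous_ofReal.tendsto 0).comp (tendsto_inv_atTop_zero (𝕜 := ℝ))
          simpa [Function.comp_def] using this
        simpa using (h1.smul_const v).const_add p0
      obtain ⟨N, hN⟩ := (hlim.eventually (hW.mem_nhds hp0)).exists_forall_of_atTop
      have hcn : Tendsto (fun k : ℕ => ((k : ℝ) + N)) atTop atTop :=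
        tendsto_atTop_add_const_right _ _ tendsto_natCast_atTop_atTop
      refine aestronglyMeasurable_of_tendsto_ae atTop
        (f := fun (k : ℕ) t => (((k : ℝ) + N : ℝ) : ℂ) •
          (F (p0 + ((((k : ℝ) + N : ℝ) : ℂ))⁻¹ • v) t - F p0 t)) ?_ ?_
      · intro k
        exact ((hmeas _ (hN ((k : ℝ) + N) (by simp))).sub (hmeas _ hp0)).const_smul (((k : ℝ) + N : ℝ) : ℂ)
      · refine (ae_restrict_iff' measurableSet_uIoc).2 (Eventually.of_forall fun t ht => ?_)
        refine (hdiff t ht p0 hp0).lim v (c := fun k : ℕ => (((k : ℝ) + N : ℝ) : ℂ)) ?_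
        simp only [Complex.norm_real]
        exact tendsto_norm_atTop_atTop.comp hcn
    set B := Module.finBasis ℂ E
    have heq : (fun t => fderiv ℂ (fun p => F p t) p0) = fun t =>
        ∑ i, (fderiv ℂ (fun p => F p t) p0 (B i)) • (LinearMap.toContinuousLinearMap (B.coord i)) := by
      funext t
      ext x
      have hx : fderiv ℂ (fun p => F p t) p0 x =
          fderiv ℂ (fun p => F p t) p0 (∑ i, B.repr x i • B i) := by rw [B.sum_repr x]
      rw [hx]
      simp only [map_sum, map_smul, smul_eq_mul, sum_apply, smul_apply,
        LinearMap.coe_toContinuousLinearMap', Module.Basis.coord_apply, mul_comm]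
    rw [heq]
    refine Finset.aestronglyMeasurable_fun_sum _ fun i _ => ?_
    exact (hv (B i)).smul_const _
  have hint : IntervalIntegrable (F p0) volume a b := by
    apply ContinuousOn.intervalIntegrable
    rw [uIcc_of_le hab]; exact hcont p0 hp0
  have hsub : ball p0 r ⊆ W := fun x hx => hK (by
    simp only [mem_closedBall, mem_ball] at *; linarith)
  have key := intervalIntegral.hasFDerivAt_integral_of_dominated_of_fderiv_le (𝕜 := ℂ)
    (μ := volume) (a := a) (b := b) (F := F)
    (F' := fun p t => fderiv ℂ (fun p => F p t) p) (x₀ := p0) (s := ball p0 r)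
    (bound := fun _ => (2 * M) / r) (ball_mem_nhds _ hr0)
    (by filter_upwards [hW.mem_nhds hp0] with p hp using hmeas p hp) hint hmeas'
    (Eventually.of_forall fun t ht x hx => by
      have hb : ball x r ⊆ closedBall p0 (2 * r) := fun y hy => by
        simp only [mem_closedBall, mem_ball] at *
        linarith [dist_triangle y x p0]
      refine Complex.norm_fderiv_le_div_of_mapsTo_ball
        ((hF t (hIoc ht)).mono (hb.trans hK)) (fun y hy => ?_) hr0
      have h1 := hM (y, t) ⟨hb hy, hIoc ht⟩
      have h2 := hM (x, t) ⟨hb (mem_ball_self hr0), hIoc ht⟩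
      simp only [mem_closedBall, dist_eq_norm] at *
      linarith [norm_sub_le (F y t) (F x t)])
    intervalIntegrable_const
    (Eventually.of_forall fun t ht x hx => hdiff t ht x (hsub hx))
  exact key.differentiableAt.differentiableWithinAt

theorem diff_fderiv_apply {E : Type*} [NormedAddCommGroup E] [NormedSpace ℂ E]
    [FiniteDimensional ℂ E] {W : Set E} (hW : IsOpen W) {f : E → ℂ}
    (hf : DifferentiableOn ℂ f W) (v : E) :
    DifferentiableOn ℂ (fun p => fderiv ℂ f p v) W := by
  intro p0 hp0
  obtain ⟨R, hR, hRW⟩ := Metric.isOpen_iff.1 hW p0 hp0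
  obtain ⟨ρ, hρ, hρv⟩ : ∃ ρ > 0, ρ * ‖v‖ < R / 2 := by
    refine ⟨R / 2 / (‖v‖ + 1), by positivity, ?_⟩
    rw [div_mul_eq_mul_div, div_lt_iff₀ (by positivity)]
    nlinarith
  have hmem : ∀ p ∈ ball p0 (R / 2), ∀ w : ℂ, ‖w‖ ≤ ρ → p + w • v ∈ W := by
    intro p hp w hw
    apply hRW
    rw [mem_ball, dist_eq_norm] at *
    have h1 : p + w • v - p0 = (p - p0) + w • v := by abel
    have h2 : ‖w • v‖ ≤ ρ * ‖v‖ := by rw [norm_smul]; gcongr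
    rw [h1]
    linarith [norm_add_le (p - p0) (w • v)]
  have hform : ∀ p ∈ ball p0 (R / 2), fderiv ℂ f p v =
      (2 * Real.pi * Complex.I : ℂ)⁻¹ • ∫ θ in (0 : ℝ)..2 * Real.pi,
        deriv (circleMap 0 ρ) θ • (((circleMap 0 ρ θ - 0) ^ 2)⁻¹ • f (p + circleMap 0 ρ θ • v)) := by
    intro p hp
    have hO : IsOpen ((fun w : ℂ => p + w • v) ⁻¹' W) := hW.preimage (by fun_prop)
    have hd : DifferentiableOn ℂ (fun w : ℂ => f (p + w • v)) ((fun w : ℂ => p + w • v) ⁻¹' W) :=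
      hf.comp (by fun_prop) (fun w hw => hw)
    have h := Complex.cderiv_eq_deriv hO hd hρ (z := 0) (fun w hw => by
      exact hmem p hp w (by simpa using hw))
    have hp' : p ∈ W := by simpa using hmem p hp 0 (by simpa using hρ.le)
    have hder : HasDerivAt (fun w : ℂ => f (p + w • v)) (fderiv ℂ f p v) 0 := by
      have h1 : HasFDerivAt f (fderiv ℂ f p) (p + (0 : ℂ) • v) := by
        simpa using (hf.differentiableAt (hW.mem_nhds hp')).hasFDerivAt
      have h2 : HasDerivAt (fun w : ℂ => p + w • v) v 0 := by
        simpa using ((hasDerivAt_id (0 : ℂ)).smul_const v).const_add p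
      exact h1.comp_hasDerivAt (0 : ℂ) h2
    rw [← hder.deriv, ← h]
    rfl
  have hball : p0 ∈ ball p0 (R / 2) := mem_ball_self (by positivity)
  have hcm : ∀ θ, ‖circleMap 0 ρ θ‖ ≤ ρ := fun θ => by simp [abs_of_pos hρ]
  have hI := diff_param_integral (W := ball p0 (R / 2)) isOpen_ball (a := 0) (b := 2 * Real.pi)
    Real.two_pi_pos.le
    (fun p θ => deriv (circleMap 0 ρ) θ • (((circleMap 0 ρ θ - 0) ^ 2)⁻¹ • f (p + circleMap 0 ρ θ • v)))
    (fun θ _ => by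
      have : DifferentiableOn ℂ (fun p => f (p + circleMap 0 ρ θ • v)) (ball p0 (R / 2)) :=
        hf.comp (by fun_prop) (fun p hp => hmem p hp _ (hcm θ))
      exact (this.const_smul (((circleMap 0 ρ θ - 0) ^ 2)⁻¹)).const_smul (deriv (circleMap 0 ρ) θ))
    (by
      have h1 : ContinuousOn (fun x : E × ℝ => f (x.1 + circleMap 0 ρ x.2 • v))
          (ball p0 (R / 2) ×ˢ Icc 0 (2 * Real.pi)) :=
        hf.continuousOn.comp
          (by
            have := continuous_circleMap 0 ρ
            fun_prop) (fun x hx => hmem x.1 hx.1 _ (hcm x.2))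
      have h2 : Continuous (fun x : E × ℝ => deriv (circleMap 0 ρ) x.2) := by
        have := continuous_circleMap 0 ρ
        simp only [deriv_circleMap]
        fun_prop
      have h3 : Continuous (fun x : E × ℝ => ((circleMap 0 ρ x.2 - 0) ^ 2)⁻¹) := by
        have := continuous_circleMap 0 ρ
        refine Continuous.inv₀ (by fun_prop) fun x => ?_
        simp [hρ.ne']
      exact h2.continuousOn.smul (h3.continuousOn.smul h1))
  have h4 := (hI.const_smul ((2 * Real.pi * Complex.I : ℂ)⁻¹)).differentiableAt
    (isOpen_ball.mem_nhds hball)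
  refine (h4.congr_of_eventuallyEq ?_).differentiableWithinAt
  filter_upwards [isOpen_ball.mem_nhds hball] with p hp using hform p hp

end analysisPart

section koszulPart

open Set

theorem sgn_insert (n : ℕ) (a b : Fin n) (I : Finset (Fin n)) (hb : b ∉ I) :
    sgn n a (insert b I) = (if b < a then -1 else 1) * sgn n a I := by
  unfold sgn
  rw [Finset.filter_insert]
  split_ifs with h
  · rw [Finset.card_insert_of_notMem (by simp [hb]), pow_succ]
    ring
  · simp

theorem sgn_mul_self (n : ℕ) (a : Fin n) (I : Finset (Fin n)) : sgn n a I * sgn n a I = 1 := by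
  unfold sgn
  rw [← mul_pow]; simp

theorem sgn_swap (n : ℕ) (J : Finset (Fin n)) (j k : Fin n) (hj : j ∈ J) (hk : k ∉ J) :
    sgn n j (J.erase j) * sgn n k (J.erase j) =
      -(sgn n k J * sgn n j ((insert k J).erase j)) := by
  have hjk : j ≠ k := fun h => hk (h ▸ hj)
  have h1 : sgn n k J = (if j < k then -1 else 1) * sgn n k (J.erase j) := by
    rw [← sgn_insert n k j _ (Finset.notMem_erase j J), Finset.insert_erase hj]
  rw [Finset.erase_insert_of_ne hjk.symm, sgn_insert n j k _ (fun h => hk (Finset.mem_of_mem_erase h)), h1]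
  rcases lt_or_gt_of_ne hjk with h | h
  · simp [h, h.not_gt]; ring
  · simp [h, h.not_gt]; ring

theorem seg_mem {n : ℕ} {U : Set (Fin n → ℂ)} (hUconv : Convex ℝ U) {p : Pt n}
    (hp : p ∈ U ×ˢ U) {t : ℝ} (ht : t ∈ Icc (0 : ℝ) 1) :
    ((p.2 + t • (p.1 - p.2), p.2) : Pt n) ∈ U ×ˢ U :=
  ⟨hUconv.add_smul_sub_mem hp.2 hp.1 ht, hp.2⟩

theorem pd_diff {n : ℕ} {U : Set (Fin n → ℂ)} (hUopen : IsOpen U) (k : Fin n) {f : Pt n → ℂ}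
    (hf : DifferentiableOn ℂ f (U ×ˢ U)) : DifferentiableOn ℂ (pd n k f) (U ×ˢ U) :=
  diff_fderiv_apply (hUopen.prod hUopen) hf _

theorem Pd_diff {n : ℕ} {U : Set (Fin n → ℂ)} (hUopen : IsOpen U) (hUconv : Convex ℝ U)
    {ω : Coeff n} (hω : ∀ I, DifferentiableOn ℂ (ω I) (U ×ˢ U)) (J : Finset (Fin n)) :
    DifferentiableOn ℂ (Pd n ω J) (U ×ˢ U) := by
  unfold Pd
  refine DifferentiableOn.fun_sum fun j _ => DifferentiableOn.const_mul ?_ _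
  have h0 := pd_diff hUopen j (hω (insert j J))
  refine diff_param_integral (hUopen.prod hUopen) zero_le_one
    (fun p t => (t : ℂ) ^ (n - (J.card + 1)) *
      pd n j (ω (insert j J)) (p.2 + t • (p.1 - p.2), p.2)) (fun t ht => ?_) ?_
  · refine DifferentiableOn.const_mul ?_ _
    refine h0.comp (f := fun p : Pt n => ((p.2 + t • (p.1 - p.2), p.2) : Pt n)) ?_
      (fun p hp => seg_mem hUconv hp ht)
    have : Differentiable ℂ (fun p : Pt n => ((p.2 + t • (p.1 - p.2), p.2) : Pt n)) :=
      (differentiable_snd.add ((differentiable_fst.sub differentiable_snd).const_smul t)).prodMk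
        differentiable_snd
    exact this.differentiableOn
  · refine ContinuousOn.mul (by fun_prop) ?_
    refine h0.continuousOn.comp
      (f := fun x : Pt n × ℝ => ((x.1.2 + x.2 • (x.1.1 - x.1.2), x.1.2) : Pt n)) (by fun_prop)
      (fun x hx => seg_mem hUconv hx.1 hx.2)

theorem diff_closed {n : ℕ} {U : Set (Fin n → ℂ)} (hUopen : IsOpen U)
    {ω : Coeff n} (hω : ∀ I, DifferentiableOn ℂ (ω I) (U ×ˢ U)) (J : Finset (Fin n))
    (k : Fin n) (hk : k ∉ J) (hcl : ∀ p ∈ U ×ˢ U, dKd n ω (insert k J) p = 0)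
    (p : Pt n) (hp : p ∈ U ×ˢ U) :
    sgn n k J * (ω J p + (p.1 k - p.2 k) * pd n k (ω J) p) +
      ∑ j ∈ J, sgn n j ((insert k J).erase j) *
        ((p.1 j - p.2 j) * pd n k (ω ((insert k J).erase j)) p) = 0 := by
  have hO : IsOpen (U ×ˢ U) := hUopen.prod hUopen
  set v : Pt n := (Pi.single k 1, 0) with hv
  have hline : HasDerivAt (fun w : ℂ => p + w • v) v 0 := by
    simpa using ((hasDerivAt_id (0 : ℂ)).smul_const v).const_add p
  have hwI : ∀ I, HasDerivAt (fun w : ℂ => ω I (p + w • v)) (pd n k (ω I) p) 0 := by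
    intro I
    have h1 : HasFDerivAt (ω I) (fderiv ℂ (ω I) p) (p + (0 : ℂ) • v) := by
      simpa using ((hω I).differentiableAt (hO.mem_nhds hp)).hasFDerivAt
    exact h1.comp_hasDerivAt (0 : ℂ) hline
  have hcoord : ∀ j : Fin n, HasDerivAt (fun w : ℂ => (p + w • v).1 j - (p + w • v).2 j)
      ((Pi.single k (1 : ℂ) : Fin n → ℂ) j) 0 := by
    intro j
    have : (fun w : ℂ => (p + w • v).1 j - (p + w • v).2 j) =
        fun w : ℂ => (p.1 j - p.2 j) + w * (Pi.single k (1 : ℂ) : Fin n → ℂ) j := by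
      funext w; simp [hv]; ring
    rw [this]
    simpa using ((hasDerivAt_id (0 : ℂ)).mul_const
      ((Pi.single k (1 : ℂ) : Fin n → ℂ) j)).const_add (p.1 j - p.2 j)
  have hsum : HasDerivAt (fun w : ℂ => dKd n ω (insert k J) (p + w • v))
      (∑ j ∈ insert k J, sgn n j ((insert k J).erase j) *
        ((Pi.single k (1 : ℂ) : Fin n → ℂ) j * ω ((insert k J).erase j) p +
          (p.1 j - p.2 j) * pd n k (ω ((insert k J).erase j)) p)) 0 := by
    unfold dKd
    refine HasDerivAt.fun_sum fun j _ => ?_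
    have := ((hcoord j).mul (hwI ((insert k J).erase j))).const_mul (sgn n j ((insert k J).erase j))
    simpa using this
  have hzero : HasDerivAt (fun w : ℂ => dKd n ω (insert k J) (p + w • v)) 0 0 := by
    refine (hasDerivAt_const (0 : ℂ) (0 : ℂ)).congr_of_eventuallyEq ?_
    have hmem : ∀ᶠ w : ℂ in nhds 0, p + w • v ∈ U ×ˢ U :=
      hline.continuousAt.eventually_mem (hO.mem_nhds (by simpa using hp))
    filter_upwards [hmem] with w hw using hcl _ hw
  have h := hsum.unique hzero
  rw [Finset.sum_insert hk, Finset.erase_insert hk] at h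
  rw [← h]
  congr 1
  · simp
  · refine Finset.sum_congr rfl fun j hj => ?_
    have hjk : j ≠ k := fun h => hk (h ▸ hj)
    simp [hjk]

theorem homotopy {n : ℕ} {U : Set (Fin n → ℂ)} (hUopen : IsOpen U) (hUconv : Convex ℝ U)
    {ω : Coeff n} (hω : ∀ I, DifferentiableOn ℂ (ω I) (U ×ˢ U))
    (hcl : ∀ J : Finset (Fin n), ∀ p ∈ U ×ˢ U, dKd n ω J p = 0)
    (J : Finset (Fin n)) (p : Pt n) (hp : p ∈ U ×ˢ U) :
    dKd n (Pd n ω) J p = ω J p - 0 ^ (n - J.card) * ω J (p.2, p.2) := by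
  have hO : IsOpen (U ×ˢ U) := hUopen.prod hUopen
  set m := n - J.card with hm
  set γ : ℝ → Pt n := fun t => (p.2 + t • (p.1 - p.2), p.2) with hγ
  have hγmem : ∀ t ∈ Icc (0 : ℝ) 1, γ t ∈ U ×ˢ U := fun t ht => seg_mem hUconv hp ht
  have hγc : Continuous γ := by fun_prop
  have hDc : ∀ k I, ContinuousOn (fun t => pd n k (ω I) (γ t)) (Icc 0 1) := fun k I =>
    (pd_diff hUopen k (hω I)).continuousOn.comp hγc.continuousOn hγmem
  have hIc : ∀ k I, IntervalIntegrable (fun t : ℝ => (t : ℂ) ^ m * pd n k (ω I) (γ t))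
      MeasureTheory.volume 0 1 := by
    intro k I
    apply ContinuousOn.intervalIntegrable
    rw [uIcc_of_le zero_le_one]
    exact ContinuousOn.mul (by fun_prop) (hDc k I)
  -- step 1
  have step1 : dKd n (Pd n ω) J p = ∫ t in (0 : ℝ)..1, ∑ j ∈ J, sgn n j (J.erase j) *
      ((p.1 j - p.2 j) * ∑ k ∈ (J.erase j)ᶜ, sgn n k (J.erase j) *
        ((t : ℂ) ^ m * pd n k (ω (insert k (J.erase j))) (γ t))) := by
    rw [intervalIntegral.integral_finsetSum]
    · unfold dKd
      refine Finset.sum_congr rfl fun j hj => ?_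
      rw [intervalIntegral.integral_const_mul, intervalIntegral.integral_const_mul,
        intervalIntegral.integral_finsetSum]
      · unfold Pd
        rw [Finset.card_erase_add_one hj]
        simp only [intervalIntegral.integral_const_mul]
        rfl
      · intro k _
        exact (hIc _ _).const_mul _
    · intro j _
      refine IntervalIntegrable.const_mul (IntervalIntegrable.const_mul ?_ _) _
      apply ContinuousOn.intervalIntegrable
      rw [uIcc_of_le zero_le_one]
      exact continuousOn_finsetSum _ fun k _ => continuousOn_const.mul
        (ContinuousOn.mul (by fun_prop) (hDc k _))
  -- step 2
  have step2 : ∀ t ∈ Icc (0 : ℝ) 1, (∑ j ∈ J, sgn n j (J.erase j) *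
      ((p.1 j - p.2 j) * ∑ k ∈ (J.erase j)ᶜ, sgn n k (J.erase j) *
        ((t : ℂ) ^ m * pd n k (ω (insert k (J.erase j))) (γ t)))) =
      (m : ℂ) * (t : ℂ) ^ (m - 1) * ω J (γ t) +
        (t : ℂ) ^ m * ∑ k, (p.1 k - p.2 k) * pd n k (ω J) (γ t) := by
    intro t ht
    have hk : ∀ k ∈ Jᶜ, (∑ j ∈ J, sgn n j (J.erase j) * ((p.1 j - p.2 j) *
        (sgn n k (J.erase j) * ((t : ℂ) ^ m * pd n k (ω (insert k (J.erase j))) (γ t))))) =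
        (t : ℂ) ^ (m - 1) * ω J (γ t) +
          (t : ℂ) ^ m * ((p.1 k - p.2 k) * pd n k (ω J) (γ t)) := by
      intro k hkJ
      have hk : k ∉ J := by simpa using hkJ
      have hm1 : m = (m - 1) + 1 := by
        have h1 : (insert k J).card ≤ n := by simpa using Finset.card_le_univ (insert k J)
        rw [Finset.card_insert_of_notMem hk] at h1
        omega
      have hc := diff_closed hUopen hω J k hk (hcl _) (γ t) (hγmem t ht)
      have hx : ∀ j, (γ t).1 j - (γ t).2 j = (t : ℂ) * (p.1 j - p.2 j) := by
        intro j; simp [hγ]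
      simp only [hx] at hc
      have hc2 := congrArg (fun y => (t : ℂ) ^ (m - 1) * sgn n k J * y) hc
      simp only [mul_add, mul_zero, Finset.mul_sum] at hc2
      have hs := sgn_mul_self n k J
      have htm : (t : ℂ) ^ m = (t : ℂ) ^ (m - 1) * t := by
        conv_lhs => rw [hm1, pow_succ]
      have hsum : (∑ j ∈ J, sgn n j (J.erase j) * ((p.1 j - p.2 j) *
        (sgn n k (J.erase j) * ((t : ℂ) ^ m * pd n k (ω (insert k (J.erase j))) (γ t))))) =
        - ∑ j ∈ J, (t : ℂ) ^ (m - 1) * sgn n k J * (sgn n j ((insert k J).erase j) *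
          ((t : ℂ) * (p.1 j - p.2 j) * pd n k (ω ((insert k J).erase j)) (γ t))) := by
        rw [← Finset.sum_neg_distrib]
        refine Finset.sum_congr rfl fun j hj => ?_
        have hjk : k ≠ j := fun h => hk (h ▸ hj)
        have hsw := sgn_swap n J j k hj hk
        rw [Finset.erase_insert_of_ne hjk] at hsw ⊢
        rw [htm]
        linear_combination ((p.1 j - p.2 j) * ((t : ℂ) ^ (m - 1) * t *
          pd n k (ω (insert k (J.erase j))) (γ t))) * hsw
      rw [hsum, htm]
      linear_combination (-1 : ℂ) * hc2 + ((t : ℂ) ^ (m - 1) * ω J (γ t) +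
        (t : ℂ) ^ (m - 1) * t * ((p.1 k - p.2 k) * pd n k (ω J) (γ t))) * hs
    have hj : ∀ j ∈ J, sgn n j (J.erase j) *
      ((p.1 j - p.2 j) * ∑ k ∈ (J.erase j)ᶜ, sgn n k (J.erase j) *
        ((t : ℂ) ^ m * pd n k (ω (insert k (J.erase j))) (γ t))) =
      (t : ℂ) ^ m * ((p.1 j - p.2 j) * pd n j (ω J) (γ t)) +
      ∑ k ∈ Jᶜ, sgn n j (J.erase j) * ((p.1 j - p.2 j) *
        (sgn n k (J.erase j) * ((t : ℂ) ^ m * pd n k (ω (insert k (J.erase j))) (γ t)))) := by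
      intro j hj
      have hs := sgn_mul_self n j (J.erase j)
      rw [Finset.compl_erase, Finset.sum_insert (by simpa using hj), Finset.insert_erase hj,
        mul_add, mul_add, Finset.mul_sum, Finset.mul_sum]
      congr 1
      linear_combination ((t : ℂ) ^ m * ((p.1 j - p.2 j) * pd n j (ω J) (γ t))) * hs
    rw [Finset.sum_congr rfl hj, Finset.sum_add_distrib, Finset.sum_comm,
      Finset.sum_congr rfl hk, Finset.sum_add_distrib, Finset.sum_const, Finset.card_compl,
      Fintype.card_fin, ← hm, nsmul_eq_mul, ← Finset.sum_add_sum_compl J, mul_add,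
      Finset.mul_sum, Finset.mul_sum]
    ring
  -- step 3
  have hder : ∀ t ∈ uIcc (0 : ℝ) 1, HasDerivAt (fun t : ℝ => (t : ℂ) ^ m * ω J (γ t))
      ((m : ℂ) * (t : ℂ) ^ (m - 1) * ω J (γ t) +
        (t : ℂ) ^ m * ∑ k, (p.1 k - p.2 k) * pd n k (ω J) (γ t)) t := by
    intro t ht
    rw [uIcc_of_le zero_le_one] at ht
    have h1 : HasDerivAt (fun t : ℝ => (t : ℂ) ^ m) ((m : ℂ) * (t : ℂ) ^ (m - 1)) t := by
      simpa using (Complex.ofRealCLM.hasDerivAt (x := t)).fun_pow m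
    have h2 : HasDerivAt γ ((p.1 - p.2, 0) : Pt n) t := by
      have := ((hasDerivAt_id t).smul_const (p.1 - p.2)).const_add p.2
      simpa using this.prodMk (hasDerivAt_const t p.2)
    have h3 : HasFDerivAt (ω J) (fderiv ℂ (ω J) (γ t)) (γ t) :=
      ((hω J).differentiableAt (hO.mem_nhds (hγmem t ht))).hasFDerivAt
    have h4 := (h3.restrictScalars ℝ).comp_hasDerivAt t h2
    have h5 : fderiv ℂ (ω J) (γ t) (p.1 - p.2, 0) =
        ∑ k, (p.1 k - p.2 k) * pd n k (ω J) (γ t) := by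
      have : ((p.1 - p.2, 0) : Pt n) =
          ∑ k, (p.1 k - p.2 k) • ((Pi.single k 1, 0) : Pt n) := by
        ext i
        · simp [Prod.fst_sum, Finset.sum_apply, Pi.single_apply]
        · simp [Prod.snd_sum, Finset.sum_apply]
      rw [this, map_sum]
      simp only [map_smul, smul_eq_mul]
      rfl
    rw [← h5]
    exact h1.mul h4
  rw [step1, intervalIntegral.integral_congr (g := fun t : ℝ =>
    (m : ℂ) * (t : ℂ) ^ (m - 1) * ω J (γ t) +
        (t : ℂ) ^ m * ∑ k, (p.1 k - p.2 k) * pd n k (ω J) (γ t))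
    (fun t ht => step2 t (by rwa [uIcc_of_le zero_le_one] at ht)),
    intervalIntegral.integral_eq_sub_of_hasDerivAt hder]
  · simp [hγ]
  · apply ContinuousOn.intervalIntegrable
    rw [uIcc_of_le zero_le_one]
    have h1 : ContinuousOn (fun t => ω J (γ t)) (Icc 0 1) :=
      (hω J).continuousOn.comp hγc.continuousOn hγmem
    refine ContinuousOn.add (ContinuousOn.mul (by fun_prop) h1) (ContinuousOn.mul (by fun_prop) ?_)
    exact continuousOn_finsetSum _ fun k _ => continuousOn_const.mul (hDc k J)

theorem pd_zero (n : ℕ) (k : Fin n) (p : Pt n) : pd n k 0 p = 0 := by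
  simp [pd]

theorem Pd_degree {n : ℕ} {q : ℕ} {ω : Coeff n} (h : ∀ I : Finset (Fin n), I.card ≠ q → ω I = 0)
    (J : Finset (Fin n)) (hJ : J.card + 1 ≠ q) : Pd n ω J = 0 := by
  funext p
  unfold Pd
  refine Finset.sum_eq_zero fun j hj => ?_
  have hj' : j ∉ J := by simpa using hj
  rw [h (insert j J) (by rwa [Finset.card_insert_of_notMem hj'])]
  simp [pd_zero]

end koszulPart

/-- The dual Koszul complex of global sections is a
resolution concentrated in top degree:
(i) for `0 ≤ q < n`, every `d_Ǩ`-closed `ω ∈ Ǩ^q` satisfies `ω = d_Ǩ(P̌ ω)`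
(in particular `ω = 0` when `q = 0`, since `d_Ǩ(P̌ ω)` vanishes in degree `0`);
(ii) `f ě^1 ∧ … ∧ ě^n ∈ Ǩ^n` lies in the image of `d_Ǩ : Ǩ^{n-1} → Ǩ^n` iff
`f(z, z) = 0` for all `z ∈ U`;
(iii) the augmentation `Ǩ^n → O(U)`, `f ě^1 ∧ … ∧ ě^n ↦ (z ↦ f(z, z))`, is
surjective — so that the augmented complex
`0 → Ǩ^0 → Ǩ^1 → … → Ǩ^n → O(U) → 0` is exact. -/
theorem statement11 (n : ℕ) (hn : 1 ≤ n)
    (U : Set (Fin n → ℂ)) (hUopen : IsOpen U) (hUconv : Convex ℝ U)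
    (hUne : U.Nonempty) :
    (∀ q : ℕ, q < n → ∀ ω : Coeff n, MemK n U q ω →
      (∀ J : Finset (Fin n), ∀ p ∈ U ×ˢ U, dKd n ω J p = 0) →
      ∀ J : Finset (Fin n), ∀ p ∈ U ×ˢ U, ω J p = dKd n (Pd n ω) J p) ∧
    (∀ f : Pt n → ℂ, DifferentiableOn ℂ f (U ×ˢ U) →
      ((∃ η : Coeff n, MemK n U (n - 1) η ∧
          ∀ p ∈ U ×ˢ U, dKd n η Finset.univ p = f p) ↔
        ∀ z ∈ U, f (z, z) = 0)) ∧
    (∀ g : (Fin n → ℂ) → ℂ, DifferentiableOn ℂ g U →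
      ∃ f : Pt n → ℂ, DifferentiableOn ℂ f (U ×ˢ U) ∧ ∀ z ∈ U, f (z, z) = g z) := by
  refine ⟨?_, ?_, ?_⟩
  · intro q hq ω hω hcl J p hp
    by_cases hJ : J.card = q
    · rw [homotopy hUopen hUconv hω.2 hcl J p hp, zero_pow (by omega)]
      ring
    · rw [hω.1 J hJ]
      symm
      unfold dKd
      refine Finset.sum_eq_zero fun j hj => ?_
      rw [Pd_degree hω.1 (J.erase j) (by rwa [Finset.card_erase_add_one hj])]
      simp
  · intro f hf
    constructor
    · rintro ⟨η, -, h⟩ z hz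
      rw [← h (z, z) ⟨hz, hz⟩]
      simp [dKd]
    · intro h0
      set ω : Coeff n := fun I => if I = Finset.univ then f else 0 with hωdef
      have hω : ∀ I, DifferentiableOn ℂ (ω I) (U ×ˢ U) := by
        intro I
        by_cases hI : I = Finset.univ
        · simpa [hωdef, hI] using hf
        · simp only [hωdef, hI, if_false]
          exact differentiableOn_const 0
      have hdeg : ∀ I : Finset (Fin n), I.card ≠ n → ω I = 0 := by
        intro I hI
        have : I ≠ Finset.univ := by rintro rfl; simp at hI
        simp [hωdef, this]
      have hcl : ∀ J : Finset (Fin n), ∀ p ∈ U ×ˢ U, dKd n ω J p = 0 := by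
        intro J p _
        unfold dKd
        refine Finset.sum_eq_zero fun j hj => ?_
        have h1 := Finset.card_erase_add_one hj
        have h2 : J.card ≤ n := by simpa using Finset.card_le_univ J
        rw [hdeg (J.erase j) (by omega)]
        simp
      refine ⟨Pd n ω, ⟨fun I hI => Pd_degree hdeg I (by omega),
        fun I => Pd_diff hUopen hUconv hω I⟩, fun p hp => ?_⟩
      rw [homotopy hUopen hUconv hω hcl _ p hp]
      simp [hωdef, h0 p.2 hp.2]
  · intro g hg
    exact ⟨fun p => g p.1, hg.comp differentiableOn_fst (fun p hp => hp.1), fun z _ => rfl⟩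

end TwistedKoszulDual
end

section
/- For each 0 ≤ m ≤ n, the homology of the total complex (T^•, d_⊗) in degree −m is isomorphic to Λ^m(ℂⁿ) ⊗_ℂ O(U) (the holomorphic m-forms on U, via e^I ↦ dz^I), the isomorphism being induced by sending a cycle to the restriction to the diagonal ζ = z of its component in K^{−m} ⊗ K^0 ≅ K^{−m}; and the homology of (T^•, d_⊗) in degree −m vanishes for m > n. -/
/-!
Setting: `n ≥ 1`, `U ⊆ ℂⁿ` a nonempty convex open set.  Points of `U × U` are
written `p = (z, ζ)` with `z = p.1`, `ζ = p.2`.  For `0 ≤ q ≤ n`,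
`K^{-q} = Λ^q(ℂⁿ) ⊗ O(U×U)` is encoded by the coefficients of its elements on
the basis `e^I`, where the strictly increasing multi-indices
`I = (i₁ < … < i_q)` are encoded as finsets `I ⊆ Fin n` of cardinality `q`.
-/

open scoped BigOperators

namespace TwistedKoszul

variable (n : ℕ)

/-- Points of `ℂⁿ × ℂⁿ`. -/
abbrev Pt (n : ℕ) := (Fin n → ℂ) × (Fin n → ℂ)

/-- A family of coefficients, indexed by the basis vectors `e^I` of the
exterior algebra `Λ^•(ℂⁿ)` (strictly increasing multi-indices `I`, encoded as
finsets).  An element of `K^{-q}` is such a family supported on finsets of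
cardinality `q`, with holomorphic coefficients (see `MemK`). -/
abbrev Coeff (n : ℕ) := Finset (Fin n) → Pt n → ℂ

/-- The sign `(-1)^{#{i ∈ I | i < j}}`, so that `e^j ∧ e^I = sgn j I • e^{I ∪ {j}}`
for `j ∉ I`. -/
noncomputable def sgn (j : Fin n) (I : Finset (Fin n)) : ℂ :=
  (-1 : ℂ) ^ (I.filter (fun i => i < j)).card

/-- The holomorphic partial derivative `∂f/∂z^j` in the `j`-th coordinate of
the first factor. -/
noncomputable def pd (j : Fin n) (f : Pt n → ℂ) (p : Pt n) : ℂ :=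
  fderiv ℂ f p (Pi.single j 1, 0)

/-- The Koszul differential `d_K : K^{-q} → K^{-q+1}`: contraction with
`Σ_i (z^i - ζ^i) ě^i`, i.e. `d_K(f e^I) = Σ_r (-1)^{r-1} (z^{i_r} - ζ^{i_r}) f e^{I_r}`. -/
noncomputable def dK (ω : Coeff n) : Coeff n := fun J p =>
  ∑ j ∈ Jᶜ, sgn n j J * ((p.1 j - p.2 j) * ω (insert j J) p)

/-- The homotopy operator `P : K^{-q} → K^{-q-1}`:
`P(f e^I) = Σ_j (∫₀¹ t^{|I|} (∂f/∂z^j)(ζ + t(z - ζ), ζ) dt) e^j ∧ e^I`. -/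
noncomputable def P (ω : Coeff n) : Coeff n := fun J p =>
  ∑ j ∈ J, sgn n j (J.erase j) *
    ∫ t in (0:ℝ)..1, (t : ℂ) ^ (J.card - 1) *
      pd n j (ω (J.erase j)) (p.2 + t • (p.1 - p.2), p.2)

/-- The operator `res`: zero on `K^{-q}` for `q ≥ 1`, and
`res(f)(z, ζ) = f(ζ, ζ)` for `f ∈ K^0`. -/
noncomputable def res (ω : Coeff n) : Coeff n := fun J p =>
  if J = ∅ then ω ∅ (p.2, p.2) else 0

/-- The element of `K^0 = O(U×U)` determined by a single function. -/
noncomputable def ofFun (f : Pt n → ℂ) : Coeff n := fun J p => if J = ∅ then f p else 0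

/-- `ω` is an element of `K^{-q}` over `U × U`: it is supported on
multi-indices of length `q` and its coefficients are holomorphic on `U × U`. -/
noncomputable def MemK (U : Set (Fin n → ℂ)) (q : ℕ) (ω : Coeff n) : Prop :=
  (∀ I : Finset (Fin n), I.card ≠ q → ω I = 0) ∧
  ∀ I : Finset (Fin n), DifferentiableOn ℂ (ω I) (U ×ˢ U)

end TwistedKoszul

namespace TwistedKoszul

variable (n : ℕ)

/-- A family of coefficients for the tensor-product complex
`T^{-m} = ⊕_{i+j=m} K^{-i} ⊗_{O(U×U)} K^{-j}`, indexed by the basis vectors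
`e^I ⊗ e^J`.  An element of `T^{-m}` is such a family supported on pairs with
`|I| + |J| = m`, with holomorphic coefficients (see `MemT`). -/
abbrev Coeff2 (n : ℕ) := Finset (Fin n) → Finset (Fin n) → Pt n → ℂ

/-- The differential `d_⊗(η ⊗ ξ) = d_K η ⊗ ξ + (-1)^i η ⊗ d_K ξ` for
`η ∈ K^{-i}`, `ξ ∈ K^{-j}`, in coefficients. -/
noncomputable def dT (c : Coeff2 n) : Coeff2 n := fun I J p =>
  (∑ j ∈ Iᶜ, sgn n j I * ((p.1 j - p.2 j) * c (insert j I) J p)) +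
    (-1 : ℂ) ^ I.card *
      ∑ j ∈ Jᶜ, sgn n j J * ((p.1 j - p.2 j) * c I (insert j J) p)

/-- `c` is an element of `T^{-m}` over `U × U`: it is supported on pairs of
multi-indices of total length `m` and its coefficients are holomorphic. -/
def MemT (U : Set (Fin n → ℂ)) (m : ℕ) (c : Coeff2 n) : Prop :=
  (∀ I J : Finset (Fin n), I.card + J.card ≠ m → c I J = 0) ∧
  ∀ I J : Finset (Fin n), DifferentiableOn ℂ (c I J) (U ×ˢ U)

open Set Metric Filter Topology MeasureTheory in
theorem cauchy_est {H : Type*} [NormedAddCommGroup H] [NormedSpace ℂ H] {g : H → ℂ} {c : H}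
    {R M : ℝ} (hR : 0 < R) (hd : DifferentiableOn ℂ g (ball c R))
    (hM : ∀ z ∈ ball c R, ‖g z‖ ≤ M) : ‖fderiv ℂ g c‖ ≤ 2 * M / R := by
  refine Complex.norm_fderiv_le_div_of_mapsTo_ball hd (fun z hz => ?_) hR
  rw [mem_closedBall, dist_eq_norm]
  have h1 := hM z hz
  have h2 := hM c (mem_ball_self hR)
  have h3 := norm_sub_le (g z) (g c)
  linarith

open Set Metric Filter Topology MeasureTheory in
theorem diff_param {H : Type*} [NormedAddCommGroup H] [NormedSpace ℂ H] [ProperSpace H]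
    {W : Set H} (hW : IsOpen W) {a b : ℝ} (hab : a ≤ b) (F : H → ℝ → ℂ)
    (hc : ContinuousOn (fun x : H × ℝ => F x.1 x.2) (W ×ˢ Icc a b))
    (hd : ∀ t ∈ Icc a b, DifferentiableOn ℂ (fun p => F p t) W) :
    DifferentiableOn ℂ (fun p => ∫ t in a..b, F p t) W := by
  intro x₀ hx₀
  obtain ⟨r, hr, hrW⟩ : ∃ r > 0, closedBall x₀ (2 * r) ⊆ W := by
    obtain ⟨ε, hε, h⟩ := Metric.isOpen_iff.1 hW x₀ hx₀
    exact ⟨ε / 4, by positivity, (closedBall_subset_ball (by linarith)).trans h⟩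
  have hK : IsCompact (closedBall x₀ (2 * r) ×ˢ Icc a b) :=
    (isCompact_closedBall _ _).prod isCompact_Icc
  have hcK := hc.mono (prod_mono hrW (le_refl (Icc a b)))
  obtain ⟨M, hM⟩ := hK.exists_bound_of_continuousOn hcK
  have huc := hK.uniformContinuousOn_of_continuous hcK
  have hsub : ∀ x ∈ ball x₀ r, ball x r ⊆ closedBall x₀ (2 * r) := by
    intro x hx y hy
    rw [mem_ball] at hx hy
    rw [mem_closedBall]
    have := dist_triangle y x x₀
    linarith
  have hIoc : Set.uIoc a b ⊆ Icc a b := by rw [uIoc_of_le hab]; exact Ioc_subset_Icc_self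
  have hslice : ∀ x ∈ W, ContinuousOn (F x) (Icc a b) := by
    intro x hx
    exact hc.comp (f := fun t : ℝ => (x, t)) (by fun_prop) (fun t ht => ⟨hx, ht⟩)
  have hDc : ContinuousOn (fun t => fderiv ℂ (fun p => F p t) x₀) (Icc a b) := by
    intro t ht
    rw [Metric.continuousWithinAt_iff]
    intro ε hε
    rw [Metric.uniformContinuousOn_iff] at huc
    obtain ⟨δ, hδ, h⟩ := huc (ε * r / 4) (by positivity)
    refine ⟨δ, hδ, fun s hs hst => ?_⟩
    have hWn := hW.mem_nhds hx₀
    rw [dist_eq_norm, ← fderiv_fun_sub ((hd s hs).differentiableAt hWn)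
      ((hd t ht).differentiableAt hWn)]
    have hbW : ball x₀ r ⊆ W := (hsub x₀ (mem_ball_self hr)).trans hrW
    have := cauchy_est (g := fun p => F p s - F p t) (c := x₀) hr (M := ε * r / 4)
      (((hd s hs).mono hbW).sub ((hd t ht).mono hbW)) (fun z hz => by
        have := h (z, s) ⟨hsub x₀ (mem_ball_self hr) hz, hs⟩
          (z, t) ⟨hsub x₀ (mem_ball_self hr) hz, ht⟩ (by
            rw [Prod.dist_eq]; simpa [hδ] using hst)
        rw [dist_eq_norm] at this
        exact this.le)
    refine this.trans_lt ?_
    field_simp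
    norm_num
  have key := intervalIntegral.hasFDerivAt_integral_of_dominated_of_fderiv_le (𝕜 := ℂ)
    (μ := volume) (a := a) (b := b) (F := F) (F' := fun x t => fderiv ℂ (fun p => F p t) x)
    (x₀ := x₀) (s := ball x₀ r) (bound := fun _ => 2 * M / r) (ball_mem_nhds x₀ hr)
    (by
      filter_upwards [hW.mem_nhds hx₀] with x hx
      exact ((hslice x hx).mono hIoc).aestronglyMeasurable measurableSet_uIoc)
    (by
      refine ContinuousOn.intervalIntegrable ?_
      rw [uIcc_of_le hab]; exact hslice x₀ hx₀)
    ((hDc.mono hIoc).aestronglyMeasurable measurableSet_uIoc)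
    (Eventually.of_forall fun t ht x hx => cauchy_est hr
      ((hd t (hIoc ht)).mono ((hsub x hx).trans hrW)) (fun z hz => hM (z, t) ⟨hsub x hx hz, hIoc ht⟩))
    (by simp)
    (Eventually.of_forall fun t ht x hx => ((hd t (hIoc ht)).differentiableAt
      (hW.mem_nhds (hrW (hsub x hx (mem_ball_self hr))))).hasFDerivAt)
  exact key.differentiableAt.differentiableWithinAt

open Set Metric Filter Topology MeasureTheory in
theorem diff_fderiv_apply {H : Type*} [NormedAddCommGroup H] [NormedSpace ℂ H] [ProperSpace H]
    {W : Set H} (hW : IsOpen W) {f : H → ℂ} (hf : DifferentiableOn ℂ f W) (v : H) :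
    DifferentiableOn ℂ (fun p => fderiv ℂ f p v) W := by
  intro x₀ hx₀
  obtain ⟨ε, hε, hεW⟩ := Metric.isOpen_iff.1 hW x₀ hx₀
  obtain ⟨r, hr, hrv⟩ : ∃ r : ℝ, 0 < r ∧ r * ‖v‖ < ε / 2 := by
    refine ⟨ε / 2 / (‖v‖ + 1), by positivity, ?_⟩
    have : 0 ≤ ‖v‖ := norm_nonneg v
    rw [div_mul_eq_mul_div, div_lt_iff₀ (by positivity)]
    nlinarith
  have hmem : ∀ x ∈ ball x₀ (ε / 2), ∀ s : ℂ, ‖s‖ ≤ r → x + s • v ∈ W := by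
    intro x hx s hs
    apply hεW
    rw [mem_ball, dist_eq_norm] at hx ⊢
    have h1 : ‖s • v‖ ≤ r * ‖v‖ := by rw [norm_smul]; gcongr
    have h2 : x + s • v - x₀ = (x - x₀) + s • v := by abel
    rw [h2]
    have := norm_add_le (x - x₀) (s • v)
    linarith
  have hcirc : ∀ θ : ℝ, ‖circleMap 0 r θ‖ ≤ r := by
    intro θ; rw [norm_circleMap_zero, abs_of_pos hr]
  have heq : ∀ x ∈ ball x₀ (ε / 2), fderiv ℂ f x v = (2 * Real.pi * Complex.I)⁻¹ *
      ∫ θ in (0:ℝ)..(2 * Real.pi), deriv (circleMap 0 r) θ •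
        ((1 / (circleMap 0 r θ - 0) ^ 2) • f (x + circleMap 0 r θ • v)) := by
    intro x hx
    have hdx : ∀ s : ℂ, HasDerivAt (fun s : ℂ => x + s • v) v s := fun s => by
      simpa using ((hasDerivAt_id s).smul_const v).const_add x
    have hdf : DifferentiableOn ℂ (fun s : ℂ => f (x + s • v)) (closedBall 0 r) := by
      refine hf.comp (fun s _ => (hdx s).differentiableAt.differentiableWithinAt) ?_
      intro s hs
      exact hmem x hx s (by simpa using hs)
    have h := DifferentiableOn.deriv_eq_smul_circleIntegral hr hdf
    have hd0 : deriv (fun s : ℂ => f (x + s • v)) 0 = fderiv ℂ f x v := by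
      have hfx : HasFDerivAt f (fderiv ℂ f x) (x + (0:ℂ) • v) := by
        have := (hf.differentiableAt (hW.mem_nhds (hmem x hx 0 (by simpa using hr.le)))).hasFDerivAt
        simpa using this
      exact (hfx.comp_hasDerivAt (0:ℂ) (hdx 0)).deriv
    rw [hd0, circleIntegral, smul_eq_mul] at h
    rw [h, inv_mul_cancel_left₀ Complex.two_pi_I_ne_zero]
  have hmain : DifferentiableOn ℂ (fun x => (2 * Real.pi * Complex.I)⁻¹ *
      ∫ θ in (0:ℝ)..(2 * Real.pi), deriv (circleMap 0 r) θ •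
        ((1 / (circleMap 0 r θ - 0) ^ 2) • f (x + circleMap 0 r θ • v))) (ball x₀ (ε / 2)) := by
    refine DifferentiableOn.const_mul (diff_param isOpen_ball (by positivity) _ ?_ ?_) _
    · have hne : ∀ θ : ℝ, (circleMap 0 r θ - 0) ^ 2 ≠ 0 := fun θ => by
        simpa using hr.ne'
      have hcm : Continuous (fun x : H × ℝ => circleMap 0 r x.2) :=
        (continuous_circleMap 0 r).comp continuous_snd
      have h1 : ContinuousOn (fun x : H × ℝ => f (x.1 + circleMap 0 r x.2 • v))
          (ball x₀ (ε / 2) ×ˢ Icc 0 (2 * Real.pi)) := by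
        refine hf.continuousOn.comp (by fun_prop) ?_
        intro x hx
        exact hmem x.1 hx.1 _ (hcirc _)
      simp only [deriv_circleMap]
      refine ContinuousOn.smul (hcm.mul continuous_const).continuousOn (ContinuousOn.fun_smul ?_ h1)
      refine Continuous.continuousOn (Continuous.div continuous_const (by fun_prop) fun x => hne x.2)
    · intro θ _
      refine DifferentiableOn.fun_const_smul (DifferentiableOn.fun_const_smul ?_ _) _
      exact hf.comp (by fun_prop) (fun x hx => hmem x hx _ (hcirc _))
  have hb : ball x₀ (ε / 2) ∈ 𝓝 x₀ := ball_mem_nhds _ (by positivity)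
  have := hmain.differentiableAt hb
  refine (this.congr_of_eventuallyEq ?_).differentiableWithinAt
  filter_upwards [hb] with x hx using heq x hx

theorem sgn_sq (j : Fin n) (I : Finset (Fin n)) : sgn n j I * sgn n j I = 1 := by
  rw [sgn, ← mul_pow]; simp

theorem sgn_insert (j k : Fin n) (A : Finset (Fin n)) (hk : k ∉ A) :
    sgn n j (insert k A) = (if k < j then -1 else 1) * sgn n j A := by
  unfold sgn
  rw [Finset.filter_insert]
  split_ifs with h
  · rw [Finset.card_insert_of_notMem (by simp [hk]), pow_succ]; ring
  · simp

theorem sgn_swap (j k : Fin n) (A : Finset (Fin n)) (hjk : j ≠ k) (hj : j ∉ A) (hk : k ∉ A) :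
    sgn n j (insert k A) * sgn n k (insert j A) = -(sgn n j A * sgn n k A) := by
  rw [sgn_insert n j k A hk, sgn_insert n k j A hj]
  rcases lt_or_gt_of_ne hjk with h | h
  · simp [h, h.not_gt]
  · simp [h, h.not_gt]

theorem sgn_swap' (j k : Fin n) (A : Finset (Fin n)) (hjk : j ≠ k) (hj : j ∉ A) (hk : k ∉ A) :
    sgn n j A * sgn n k (insert j A) = -(sgn n k A * sgn n j (insert k A)) := by
  rw [sgn_insert n j k A hk, sgn_insert n k j A hj]
  rcases lt_or_gt_of_ne hjk with h | h
  · simp [h, h.not_gt]; ring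
  · simp [h, h.not_gt]; ring

theorem cartan (w : Finset (Fin n) → ℂ) (D : Fin n → Finset (Fin n) → ℂ) (x : Fin n → ℂ)
    (h : ∀ k A, ∑ j ∈ Aᶜ, sgn n j A * ((if j = k then 1 else 0) * w (insert j A)
      + x j * D k (insert j A)) = 0) (J : Finset (Fin n)) :
    ∑ j ∈ Jᶜ, sgn n j J * (x j * ∑ k ∈ insert j J,
      sgn n k ((insert j J).erase k) * D k ((insert j J).erase k)) =
    ∑ j, x j * D j J + J.card * w J := by
  have h1 : ∀ j ∈ Jᶜ, sgn n j J * (x j * ∑ k ∈ insert j J,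
      sgn n k ((insert j J).erase k) * D k ((insert j J).erase k)) =
      x j * D j J + ∑ k ∈ J, sgn n j J * (x j *
        (sgn n k (insert j (J.erase k)) * D k (insert j (J.erase k)))) := by
    intro j hj
    have hj' : j ∉ J := by simpa using hj
    rw [Finset.sum_insert hj', Finset.erase_insert hj', mul_add, mul_add, Finset.mul_sum,
      Finset.mul_sum]
    congr 1
    · linear_combination (x j * D j J) * sgn_sq n j J
    · refine Finset.sum_congr rfl fun k hk => ?_
      rw [Finset.erase_insert_of_ne (by rintro rfl; exact hj' hk)]
  rw [Finset.sum_congr rfl h1, Finset.sum_add_distrib, Finset.sum_comm]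
  have h2 : ∀ k ∈ J, ∑ j ∈ Jᶜ, sgn n j J * (x j *
        (sgn n k (insert j (J.erase k)) * D k (insert j (J.erase k)))) = w J + x k * D k J := by
    intro k hk
    have hc : (J.erase k)ᶜ = insert k Jᶜ := by simp
    have := h k (J.erase k)
    rw [hc, Finset.sum_insert (by simpa using hk), Finset.insert_erase hk] at this
    have h3 : ∑ j ∈ Jᶜ, sgn n j J * (x j *
        (sgn n k (insert j (J.erase k)) * D k (insert j (J.erase k)))) =
        - (sgn n k (J.erase k)) * ∑ j ∈ Jᶜ, sgn n j (J.erase k) *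
        ((if j = k then 1 else 0) * w (insert j (J.erase k))
      + x j * D k (insert j (J.erase k))) := by
      rw [Finset.mul_sum]
      refine Finset.sum_congr rfl fun j hj => ?_
      have hj' : j ∉ J := by simpa using hj
      have hjk : j ≠ k := by rintro rfl; exact hj' hk
      have := sgn_swap n j k (J.erase k) hjk (by simp [hj']) (by simp)
      rw [Finset.insert_erase hk] at this
      rw [if_neg hjk]
      linear_combination (x j * D k (insert j (J.erase k))) * this
    rw [h3]
    simp only [if_true, one_mul] at this
    linear_combination (-(sgn n k (J.erase k))) * this + (w J + x k * D k J) * sgn_sq n k (J.erase k)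
  rw [Finset.sum_congr rfl h2, Finset.sum_add_distrib]
  rw [← Finset.sum_compl_add_sum J (fun j => x j * D j J)]
  simp
  ring

theorem pd_zero (j : Fin n) (p : Pt n) : pd n j 0 p = 0 := by
  unfold pd
  have : (0 : Pt n → ℂ) = fun _ => 0 := rfl
  rw [this]; simp

theorem P_supp {q : ℕ} {ω : Coeff n} (h : ∀ I : Finset (Fin n), I.card ≠ q → ω I = 0)
    (J : Finset (Fin n)) (hJ : J.card ≠ q + 1) : P n ω J = 0 := by
  funext p
  unfold P
  refine Finset.sum_eq_zero fun j hj => ?_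
  rw [h (J.erase j) (by
    rw [Finset.card_erase_of_mem hj]
    have := Finset.card_pos.2 ⟨j, hj⟩
    omega)]
  simp [pd_zero]

theorem seg_mem {U : Set (Fin n → ℂ)} (hUconv : Convex ℝ U) {p : Pt n} (hp : p ∈ U ×ˢ U)
    {t : ℝ} (ht : t ∈ Set.Icc (0:ℝ) 1) : ((p.2 + t • (p.1 - p.2), p.2) : Pt n) ∈ U ×ˢ U :=
  ⟨hUconv.add_smul_sub_mem hp.2 hp.1 ht, hp.2⟩

theorem pd_diff {U : Set (Fin n → ℂ)} (hUopen : IsOpen U) {f : Pt n → ℂ}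
    (hf : DifferentiableOn ℂ f (U ×ˢ U)) (j : Fin n) :
    DifferentiableOn ℂ (pd n j f) (U ×ˢ U) :=
  diff_fderiv_apply (hUopen.prod hUopen) hf _

theorem P_diff {U : Set (Fin n → ℂ)} (hUopen : IsOpen U) (hUconv : Convex ℝ U) {ω : Coeff n}
    (h : ∀ I : Finset (Fin n), DifferentiableOn ℂ (ω I) (U ×ˢ U)) (J : Finset (Fin n)) :
    DifferentiableOn ℂ (P n ω J) (U ×ˢ U) := by
  unfold P
  refine DifferentiableOn.fun_sum fun j _ => DifferentiableOn.const_mul ?_ _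
  have hpd := pd_diff n hUopen (h (J.erase j)) j
  refine diff_param (hUopen.prod hUopen) zero_le_one _ ?_ ?_
  · refine ContinuousOn.mul (by fun_prop) ?_
    refine hpd.continuousOn.comp (f := fun x : Pt n × ℝ =>
      ((x.1.2 + x.2 • (x.1.1 - x.1.2), x.1.2) : Pt n)) (by fun_prop) ?_
    intro x hx
    exact seg_mem n hUconv hx.1 hx.2
  · intro t ht
    refine DifferentiableOn.const_mul ?_ _
    refine hpd.comp (f := fun x : Pt n =>
      ((x.2 + t • (x.1 - x.2), x.2) : Pt n)) ?_ ?_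
    · refine Differentiable.differentiableOn ?_
      have : (fun x : Pt n => ((x.2 + t • (x.1 - x.2), x.2) : Pt n)) =
        fun x : Pt n => ((x.2 + (t:ℂ) • (x.1 - x.2), x.2) : Pt n) := by
        funext x; rw [Complex.coe_smul]
      rw [this]
      fun_prop
    · intro x hx
      exact seg_mem n hUconv hx ht

theorem closed_deriv {U : Set (Fin n → ℂ)} (hUopen : IsOpen U) {ω : Coeff n}
    (h : ∀ I : Finset (Fin n), DifferentiableOn ℂ (ω I) (U ×ˢ U))
    (hcl : ∀ I, ∀ p ∈ U ×ˢ U, dK n ω I p = 0) (p : Pt n) (hp : p ∈ U ×ˢ U)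
    (k : Fin n) (A : Finset (Fin n)) :
    ∑ j ∈ Aᶜ, sgn n j A * ((if j = k then 1 else 0) * ω (insert j A) p
      + (p.1 j - p.2 j) * pd n k (ω (insert j A)) p) = 0 := by
  set v : Pt n := (Pi.single k 1, 0) with hv
  have hW := (hUopen.prod hUopen).mem_nhds hp
  have hline : HasDerivAt (fun s : ℂ => p + s • v) v 0 := by
    simpa using ((hasDerivAt_id (0:ℂ)).smul_const v).const_add p
  have hω : ∀ I, HasDerivAt (fun s : ℂ => ω I (p + s • v)) (pd n k (ω I) p) 0 := by
    intro I
    have hfx : HasFDerivAt (ω I) (fderiv ℂ (ω I) p) (p + (0:ℂ) • v) := by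
      simpa using ((h I).differentiableAt hW).hasFDerivAt
    exact hfx.comp_hasDerivAt (0:ℂ) hline
  have hx : ∀ j, HasDerivAt (fun s : ℂ => (p + s • v).1 j - (p + s • v).2 j)
      (if j = k then 1 else 0) 0 := by
    intro j
    have : (fun s : ℂ => (p + s • v).1 j - (p + s • v).2 j) =
      fun s : ℂ => (p.1 j - p.2 j) + s * (if j = k then 1 else 0) := by
      funext s
      simp [hv, Pi.single_apply]
      ring
    rw [this]
    simpa using ((hasDerivAt_id (0:ℂ)).mul_const (if j = k then (1:ℂ) else 0)).const_add (p.1 j - p.2 j)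
  have hsum : HasDerivAt (fun s : ℂ => dK n ω A (p + s • v))
      (∑ j ∈ Aᶜ, sgn n j A * ((if j = k then 1 else 0) * ω (insert j A) p
      + (p.1 j - p.2 j) * pd n k (ω (insert j A)) p)) 0 := by
    unfold dK
    refine HasDerivAt.fun_sum fun j _ => HasDerivAt.const_mul _ ?_
    simpa using (hx j).fun_mul (hω (insert j A))
  have hzero : HasDerivAt (fun s : ℂ => dK n ω A (p + s • v)) 0 0 := by
    refine (hasDerivAt_const (0:ℂ) (0:ℂ)).congr_of_eventuallyEq ?_
    have : Filter.Tendsto (fun s : ℂ => p + s • v) (nhds 0) (nhds p) := by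
      simpa using hline.continuousAt.tendsto
    filter_upwards [this hW] with s hs using hcl A _ hs
  exact hsum.unique hzero

theorem koszul {U : Set (Fin n → ℂ)} (hUopen : IsOpen U) (hUconv : Convex ℝ U) {q : ℕ}
    {ω : Coeff n} (hω : MemK n U q ω)
    (hcl : ∀ I, ∀ p ∈ U ×ˢ U, dK n ω I p = 0)
    (h0 : q = 0 → ∀ z ∈ U, ω ∅ (z, z) = 0) (J : Finset (Fin n)) (p : Pt n) (hp : p ∈ U ×ˢ U) :
    dK n (P n ω) J p = ω J p := by
  obtain ⟨hs, hd⟩ := hω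
  by_cases hJ : J.card = q
  swap
  · rw [hs J hJ]
    unfold dK
    refine Finset.sum_eq_zero fun j hj => ?_
    have hj' : j ∉ J := by simpa using hj
    rw [P_supp n hs _ (by rw [Finset.card_insert_of_notMem hj']; omega)]
    simp
  set γ : ℝ → Pt n := fun t => (p.2 + t • (p.1 - p.2), p.2) with hγ
  have hγc : Continuous γ := by fun_prop
  have hγm : ∀ t ∈ Set.Icc (0:ℝ) 1, γ t ∈ U ×ˢ U := fun t ht => seg_mem n hUconv hp ht
  have hpdc : ∀ k I, ContinuousOn (fun t => pd n k (ω I) (γ t)) (Set.Icc 0 1) := fun k I =>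
    (pd_diff n hUopen (hd I) k).continuousOn.comp hγc.continuousOn hγm
  have hint : ∀ k I, IntervalIntegrable (fun t : ℝ => (t:ℂ) ^ q * pd n k (ω I) (γ t))
      MeasureTheory.volume 0 1 := by
    intro k I
    refine ContinuousOn.intervalIntegrable ?_
    rw [Set.uIcc_of_le zero_le_one]
    exact ContinuousOn.mul (by fun_prop) (hpdc k I)
  set G : ℝ → ℂ := fun t => ∑ j ∈ Jᶜ, sgn n j J * ((p.1 j - p.2 j) * ∑ k ∈ insert j J,
      sgn n k ((insert j J).erase k) *
        ((t:ℂ) ^ q * pd n k (ω ((insert j J).erase k)) (γ t))) with hG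
  have hGc : ContinuousOn G (Set.Icc 0 1) := by
    refine continuousOn_finsetSum _ fun j _ => continuousOn_const.mul (continuousOn_const.mul
      (continuousOn_finsetSum _ fun k _ => continuousOn_const.mul
        (ContinuousOn.mul (by fun_prop) (hpdc k _))))
  have e1 : dK n (P n ω) J p = ∫ t in (0:ℝ)..1, G t := by
    rw [hG, intervalIntegral.integral_finsetSum]
    · unfold dK P
      refine Finset.sum_congr rfl fun j hj => ?_
      have hj' : j ∉ J := by simpa using hj
      rw [intervalIntegral.integral_const_mul, intervalIntegral.integral_const_mul,
        intervalIntegral.integral_finsetSum]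
      · congr 2
        refine Finset.sum_congr rfl fun k hk => ?_
        rw [intervalIntegral.integral_const_mul, Finset.card_insert_of_notMem hj', hJ]
        rfl
      · intro k _
        exact (hint k _).const_mul _
    · intro j _
      refine IntervalIntegrable.const_mul (IntervalIntegrable.const_mul ?_ _) _
      refine ContinuousOn.intervalIntegrable ?_
      rw [Set.uIcc_of_le zero_le_one]
      exact (continuousOn_finsetSum _ fun k _ => continuousOn_const.mul
        (ContinuousOn.mul (by fun_prop) (hpdc k _)))
  have hder : ∀ t ∈ Set.Ioo (0:ℝ) 1, HasDerivAt (fun t : ℝ => (t:ℂ) ^ q * ω J (γ t)) (G t) t := by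
    intro t ht
    have htm := hγm t (Set.Ioo_subset_Icc_self ht)
    have ht0 : (t:ℂ) ≠ 0 := by exact_mod_cast ht.1.ne'
    have hγd : HasDerivAt γ ((p.1 - p.2, 0) : Pt n) t := by
      have h1 : HasDerivAt (fun t : ℝ => p.2 + t • (p.1 - p.2)) (p.1 - p.2) t := by
        simpa using ((hasDerivAt_id t).smul_const (p.1 - p.2)).const_add p.2
      exact h1.prodMk (hasDerivAt_const t p.2)
    have hωd : HasDerivAt (fun t => ω J (γ t)) (fderiv ℂ (ω J) (γ t) (p.1 - p.2, 0)) t := by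
      have := ((hd J).differentiableAt ((hUopen.prod hUopen).mem_nhds htm)).hasFDerivAt
      exact (this.restrictScalars ℝ).comp_hasDerivAt t hγd
    have hpow : HasDerivAt (fun t : ℝ => (t:ℂ) ^ q) ((q:ℂ) * (t:ℂ) ^ (q - 1)) t :=
      (hasDerivAt_pow q (t:ℂ)).comp_ofReal
    have hprod := hpow.fun_mul hωd
    suffices hval : G t = (q:ℂ) * (t:ℂ) ^ (q - 1) * ω J (γ t) +
        (t:ℂ) ^ q * fderiv ℂ (ω J) (γ t) (p.1 - p.2, 0) by
      rw [hval]; exact hprod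
    have hlin : fderiv ℂ (ω J) (γ t) (p.1 - p.2, 0) =
        ∑ j, (p.1 j - p.2 j) * pd n j (ω J) (γ t) := by
      have : ((p.1 - p.2, 0) : Pt n) = ∑ j, (p.1 j - p.2 j) • ((Pi.single j 1, 0) : Pt n) := by
        refine Prod.ext ?_ ?_
        · funext i
          simp [Prod.fst_sum, Finset.sum_apply, Pi.single_apply]
        · simp [Prod.snd_sum]
      rw [this, map_sum]
      simp only [map_smul, smul_eq_mul]
      rfl
    rw [hlin]
    have hc := cartan n (fun I => ω I (γ t)) (fun k I => pd n k (ω I) (γ t))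
      (fun j => (γ t).1 j - (γ t).2 j)
      (fun k A => closed_deriv n hUopen hd hcl (γ t) htm k A) J
    have hx : ∀ j, (γ t).1 j - (γ t).2 j = t * (p.1 j - p.2 j) := by
      intro j; simp [hγ]
    simp only [hx] at hc
    have hG2 : (t:ℂ) * G t = (t:ℂ) ^ q * ∑ j ∈ Jᶜ, sgn n j J * (t * (p.1 j - p.2 j) *
        ∑ k ∈ insert j J, sgn n k ((insert j J).erase k) *
          pd n k (ω ((insert j J).erase k)) (γ t)) := by
      rw [hG]
      simp only [Finset.mul_sum]
      refine Finset.sum_congr rfl fun j _ => Finset.sum_congr rfl fun k _ => ?_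
      ring
    rw [hc, hJ] at hG2
    apply mul_left_cancel₀ ht0
    rw [hG2, mul_add, Finset.mul_sum, mul_add, Finset.mul_sum, Finset.mul_sum, add_comm]
    congr 1
    · rcases Nat.eq_zero_or_pos q with h | h
      · simp [h]
      · obtain ⟨m, rfl⟩ : ∃ m, q = m + 1 := ⟨q - 1, by omega⟩
        simp only [Nat.add_sub_cancel]
        ring
    · refine Finset.sum_congr rfl fun j _ => ?_
      ring
  have hfc : ContinuousOn (fun t : ℝ => (t:ℂ) ^ q * ω J (γ t)) (Set.Icc 0 1) :=
    ContinuousOn.mul (by fun_prop) ((hd J).continuousOn.comp hγc.continuousOn hγm)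
  have e2 := intervalIntegral.integral_eq_sub_of_hasDerivAt_of_le zero_le_one hfc hder
    (by
      refine ContinuousOn.intervalIntegrable ?_
      rw [Set.uIcc_of_le zero_le_one]
      exact hGc)
  rw [e1, e2]
  have g1 : γ 1 = p := by simp [hγ]
  have g0 : γ 0 = (p.2, p.2) := by simp [hγ]
  simp only [g1, g0]
  rcases Nat.eq_zero_or_pos q with h | h
  · have : J = ∅ := by rw [← Finset.card_eq_zero, hJ, h]
    subst this
    rw [h0 h p.2 hp.2]
    simp
  · simp [h.ne']

theorem contr_sq (x : Fin n → ℂ) (w : Finset (Fin n) → ℂ) (A : Finset (Fin n)) :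
    ∑ j ∈ Aᶜ, sgn n j A * (x j * ∑ k ∈ (insert j A)ᶜ, sgn n k (insert j A) *
      (x k * w (insert k (insert j A)))) = 0 := by
  set f : Fin n → Fin n → ℂ := fun j k => if k = j then 0 else
    sgn n j A * (x j * (sgn n k (insert j A) * (x k * w (insert k (insert j A))))) with hf
  have h1 : ∑ j ∈ Aᶜ, sgn n j A * (x j * ∑ k ∈ (insert j A)ᶜ, sgn n k (insert j A) *
      (x k * w (insert k (insert j A)))) = ∑ j ∈ Aᶜ, ∑ k ∈ Aᶜ, f j k := by
    refine Finset.sum_congr rfl fun j hj => ?_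
    rw [Finset.compl_insert, ← Finset.add_sum_erase _ _ hj, Finset.mul_sum, Finset.mul_sum]
    simp only [hf, if_true, zero_add]
    refine Finset.sum_congr rfl fun k hk => ?_
    rw [if_neg (Finset.ne_of_mem_erase hk)]
  have h2 : ∑ j ∈ Aᶜ, ∑ k ∈ Aᶜ, f j k = - ∑ j ∈ Aᶜ, ∑ k ∈ Aᶜ, f j k := by
    conv_rhs => rw [Finset.sum_comm]
    rw [← Finset.sum_neg_distrib]
    refine Finset.sum_congr rfl fun j hj => ?_
    rw [← Finset.sum_neg_distrib]
    refine Finset.sum_congr rfl fun k hk => ?_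
    by_cases h : k = j
    · simp [hf, h]
    · have h' : ¬ j = k := fun e => h e.symm
      simp only [hf, if_neg h, if_neg h']
      rw [Finset.insert_comm j k A]
      have := sgn_swap' n j k A h' (by simpa using hj) (by simpa using hk)
      linear_combination (x j * x k * w (insert k (insert j A))) * this
  rw [h1]
  exact self_eq_neg.1 h2

theorem dT_sq (c : Coeff2 n) (I J : Finset (Fin n)) (p : Pt n) : dT n (dT n c) I J p = 0 := by
  unfold dT
  set x : Fin n → ℂ := fun j => p.1 j - p.2 j with hx
  have hA := contr_sq n x (fun I => c I J p) I
  have hB := contr_sq n x (fun J => c I J p) J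
  have hcard : ∀ j ∈ Iᶜ, (insert j I).card = I.card + 1 := fun j hj =>
    Finset.card_insert_of_notMem (by simpa using hj)
  have e1 : ∑ j ∈ Iᶜ, sgn n j I * ((p.1 j - p.2 j) *
      ((∑ k ∈ (insert j I)ᶜ, sgn n k (insert j I) * ((p.1 k - p.2 k) *
        c (insert k (insert j I)) J p)) + (-1 : ℂ) ^ (insert j I).card *
        ∑ k ∈ Jᶜ, sgn n k J * ((p.1 k - p.2 k) * c (insert j I) (insert k J) p))) =
      - (-1 : ℂ) ^ I.card * ∑ j ∈ Iᶜ, ∑ k ∈ Jᶜ, sgn n j I * (x j *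
        (sgn n k J * (x k * c (insert j I) (insert k J) p))) := by
    rw [← zero_add (_ * _), ← hA, Finset.mul_sum, ← Finset.sum_add_distrib]
    refine Finset.sum_congr rfl fun j hj => ?_
    rw [hcard j hj, mul_add, mul_add]
    congr 1
    simp only [Finset.mul_sum]
    refine Finset.sum_congr rfl fun k _ => ?_
    simp only [hx]
    ring
  have e2 : ∑ k ∈ Jᶜ, sgn n k J * ((p.1 k - p.2 k) *
      ((∑ j ∈ Iᶜ, sgn n j I * ((p.1 j - p.2 j) * c (insert j I) (insert k J) p)) +
        (-1 : ℂ) ^ I.card * ∑ j ∈ (insert k J)ᶜ, sgn n j (insert k J) *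
          ((p.1 j - p.2 j) * c I (insert j (insert k J)) p))) =
      ∑ j ∈ Iᶜ, ∑ k ∈ Jᶜ, sgn n j I * (x j *
        (sgn n k J * (x k * c (insert j I) (insert k J) p))) := by
    rw [Finset.sum_comm, ← add_zero (Finset.sum Jᶜ (fun y => Finset.sum Iᶜ _)),
      ← mul_zero ((-1 : ℂ) ^ I.card), ← hB, Finset.mul_sum, ← Finset.sum_add_distrib]
    refine Finset.sum_congr rfl fun k hk => ?_
    rw [mul_add, mul_add]
    congr 1
    · simp only [Finset.mul_sum]
      refine Finset.sum_congr rfl fun j _ => ?_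
      simp only [hx]
      ring
    · simp only [hx]
      ring
  rw [e1, e2]
  ring

theorem dT_add (b c : Coeff2 n) (I J : Finset (Fin n)) (p : Pt n) :
    dT n (b + c) I J p = dT n b I J p + dT n c I J p := by
  unfold dT
  simp only [Pi.add_apply, mul_add, Finset.sum_add_distrib]
  ring

theorem dT_sub (b c : Coeff2 n) (I J : Finset (Fin n)) (p : Pt n) :
    dT n (b - c) I J p = dT n b I J p - dT n c I J p := by
  unfold dT
  simp only [Pi.sub_apply, mul_sub, Finset.sum_sub_distrib]
  ring

theorem dT_diag (b : Coeff2 n) (I J : Finset (Fin n)) (z : Fin n → ℂ) :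
    dT n b I J (z, z) = 0 := by
  unfold dT
  simp

theorem MemT.add {U : Set (Fin n → ℂ)} {m : ℕ} {b c : Coeff2 n} (hb : MemT n U m b)
    (hc : MemT n U m c) : MemT n U m (b + c) :=
  ⟨fun I J h => by simp [hb.1 I J h, hc.1 I J h], fun I J => (hb.2 I J).add (hc.2 I J)⟩

theorem MemT.sub {U : Set (Fin n → ℂ)} {m : ℕ} {b c : Coeff2 n} (hb : MemT n U m b)
    (hc : MemT n U m c) : MemT n U m (b - c) :=
  ⟨fun I J h => by simp [hb.1 I J h, hc.1 I J h], fun I J => (hb.2 I J).sub (hc.2 I J)⟩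

theorem MemT.dT {U : Set (Fin n → ℂ)} {m : ℕ} {b : Coeff2 n} (hb : MemT n U (m + 1) b) :
    MemT n U m (dT n b) := by
  refine ⟨fun I J h => ?_, fun I J => ?_⟩
  · funext p
    unfold TwistedKoszul.dT
    have h1 : ∀ j ∈ Iᶜ, b (insert j I) J = 0 := fun j hj => hb.1 _ _ (by
      rw [Finset.card_insert_of_notMem (by simpa using hj)]; omega)
    have h2 : ∀ j ∈ Jᶜ, b I (insert j J) = 0 := fun j hj => hb.1 _ _ (by
      rw [Finset.card_insert_of_notMem (by simpa using hj)]; omega)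
    rw [Finset.sum_eq_zero (fun j hj => by rw [h1 j hj]; simp),
      Finset.sum_eq_zero (fun j hj => by rw [h2 j hj]; simp)]
    simp
  · unfold TwistedKoszul.dT
    have hx : ∀ j : Fin n, DifferentiableOn ℂ (fun p : Pt n => p.1 j - p.2 j) (U ×ˢ U) := by
      intro j; fun_prop
    refine DifferentiableOn.fun_add (DifferentiableOn.fun_sum fun j _ =>
      ((hx j).fun_mul (hb.2 _ _)).const_mul _) (DifferentiableOn.const_mul
        (DifferentiableOn.fun_sum fun j _ => ((hx j).fun_mul (hb.2 _ _)).const_mul _) _)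

theorem main_step {U : Set (Fin n → ℂ)} (hUopen : IsOpen U) (hUconv : Convex ℝ U) (m : ℕ)
    (k : ℕ) : ∀ c : Coeff2 n, MemT n U m c →
      (∀ I J : Finset (Fin n), ∀ p ∈ U ×ˢ U, dT n c I J p = 0) →
      (∀ I : Finset (Fin n), ∀ z ∈ U, c I ∅ (z, z) = 0) →
      (∀ I J : Finset (Fin n), J.card + k ≤ m → ∀ p ∈ U ×ˢ U, c I J p = 0) →
      ∃ b : Coeff2 n, MemT n U (m + 1) b ∧
        (∀ I J : Finset (Fin n), ∀ p ∈ U ×ˢ U, dT n b I J p = c I J p) ∧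
        ∀ I, b I ∅ = 0 := by
  induction k with
  | zero =>
    intro c hc _ _ h
    refine ⟨0, ⟨fun _ _ _ => rfl, fun _ _ => differentiableOn_const 0⟩, fun I J p hp => ?_,
      fun _ => rfl⟩
    have h0 : dT n 0 I J p = 0 := by unfold dT; simp
    rw [h0]
    by_cases hJ : J.card ≤ m
    · exact (h I J (by omega) p hp).symm
    · rw [hc.1 I J (by omega)]; rfl
  | succ k ih =>
    intro c hc hcl hdiag h
    by_cases hkm : k ≤ m
    swap
    · exact ih c hc hcl hdiag (fun I J hJ => by omega)
    obtain ⟨j₀, rfl⟩ : ∃ j₀, m = j₀ + k := ⟨m - k, by omega⟩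
    set ω : Finset (Fin n) → Coeff n := fun I J => if J.card = j₀ then c I J else 0 with hω
    have hωK : ∀ I, MemK n U j₀ (ω I) := by
      intro I
      refine ⟨fun J hJ => by simp [hω, hJ], fun J => ?_⟩
      by_cases hJ : J.card = j₀
      · simp only [hω, hJ, if_true]; exact hc.2 I J
      · simp only [hω, hJ, if_false]; exact differentiableOn_const 0
    have hωcl : ∀ I J, ∀ p ∈ U ×ˢ U, dK n (ω I) J p = 0 := by
      intro I J p hp
      by_cases hJ : J.card + 1 = j₀
      · have h1 := hcl I J p hp
        unfold dT at h1
        rw [Finset.sum_eq_zero (fun j _ => by rw [h (insert j I) J (by omega) p hp]; simp),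
          zero_add] at h1
        have h2 := (mul_eq_zero.1 h1).resolve_left (by simp)
        rw [← h2]
        unfold dK
        refine Finset.sum_congr rfl fun j hj => ?_
        have : (insert j J).card = j₀ := by
          rw [Finset.card_insert_of_notMem (by simpa using hj)]; omega
        simp only [hω, this, if_true]
      · unfold dK
        refine Finset.sum_eq_zero fun j hj => ?_
        have : (insert j J).card ≠ j₀ := by
          rw [Finset.card_insert_of_notMem (by simpa using hj)]; omega
        simp [hω, this]
    have hωP : ∀ I J, ∀ p ∈ U ×ˢ U, dK n (P n (ω I)) J p = ω I J p := fun I J p hp =>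
      koszul n hUopen hUconv (hωK I) (hωcl I) (fun h0 z hz => by
        simp only [hω, Finset.card_empty, h0, if_true]; exact hdiag I z hz) J p hp
    set b₁ : Coeff2 n := fun I J p => (-1 : ℂ) ^ I.card * P n (ω I) J p with hb₁
    have hb₁0 : ∀ I J, J.card ≠ j₀ + 1 → b₁ I J = 0 := by
      intro I J hJ
      funext p
      simp only [hb₁]
      rw [P_supp n (hωK I).1 J hJ]
      simp
    have hb₁M : MemT n U (j₀ + k + 1) b₁ := by
      refine ⟨fun I J hIJ => ?_, fun I J =>
        (P_diff n hUopen hUconv (hωK I).2 J).const_mul _⟩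
      by_cases hJ : J.card = j₀ + 1
      · have hz : ∀ L, ω I L = 0 := by
          intro L
          by_cases hL : L.card = j₀
          · simp only [hω, hL, if_true]; exact hc.1 I L (by omega)
          · simp [hω, hL]
        funext p
        simp only [hb₁]
        rw [P_supp n (q := J.card) (fun L _ => hz L) J (by omega)]
        simp
      · exact hb₁0 I J hJ
    have hdb : ∀ I J, J.card ≤ j₀ → ∀ p ∈ U ×ˢ U, dT n b₁ I J p = ω I J p := by
      intro I J hJ p hp
      have e : dT n b₁ I J p = (∑ j ∈ Iᶜ, sgn n j I * ((p.1 j - p.2 j) * b₁ (insert j I) J p)) +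
        (-1 : ℂ) ^ I.card * ((-1 : ℂ) ^ I.card * dK n (P n (ω I)) J p) := by
        unfold dT dK
        congr 2
        rw [Finset.mul_sum]
        refine Finset.sum_congr rfl fun j _ => ?_
        simp only [hb₁]
        ring
      rw [e, hωP I J p hp, Finset.sum_eq_zero (fun j _ => by
        rw [hb₁0 (insert j I) J (by omega)]; simp), ← mul_assoc, ← mul_pow]
      simp
    obtain ⟨b₂, hb₂M, hb₂, hb₂0⟩ := ih (c - dT n b₁) (hc.sub n (hb₁M.dT n))
      (fun I J p hp => by rw [dT_sub, dT_sq, hcl I J p hp, sub_zero])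
      (fun I z hz => by
        simp only [Pi.sub_apply]
        rw [dT_diag, hdiag I z hz, sub_zero])
      (fun I J hJ p hp => by
        simp only [Pi.sub_apply]
        rw [hdb I J (by omega) p hp]
        by_cases hJ' : J.card = j₀
        · simp [hω, hJ']
        · rw [h I J (by omega) p hp]
          simp [hω, hJ'])
    refine ⟨b₁ + b₂, hb₁M.add n hb₂M, fun I J p hp => ?_, fun I => ?_⟩
    · rw [dT_add, hb₂ I J p hp]
      simp
    · simp only [Pi.add_apply]
      rw [hb₂0, hb₁0 I ∅ (by simp)]
      simp

theorem main_exact {U : Set (Fin n → ℂ)} (hUopen : IsOpen U) (hUconv : Convex ℝ U) (m : ℕ)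
    (c : Coeff2 n) (hc : MemT n U m c)
    (hcl : ∀ I J : Finset (Fin n), ∀ p ∈ U ×ˢ U, dT n c I J p = 0)
    (hdiag : ∀ I : Finset (Fin n), I.card = m → ∀ z ∈ U, c I ∅ (z, z) = 0) :
    ∃ b : Coeff2 n, MemT n U (m + 1) b ∧
        (∀ I J : Finset (Fin n), ∀ p ∈ U ×ˢ U, dT n b I J p = c I J p) ∧
        ∀ I, b I ∅ = 0 := by
  refine main_step n hUopen hUconv m (m + 1) c hc hcl (fun I z hz => ?_) (fun I J h => by omega)
  by_cases hI : I.card = m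
  · exact hdiag I hI z hz
  · rw [hc.1 I ∅ (by simpa using hI)]; rfl

/-- For `0 ≤ m ≤ n`, the homology of the total complex
`(T^•, d_⊗)` in degree `-m` is isomorphic to `Λ^m(ℂⁿ) ⊗ O(U)` (holomorphic
`m`-forms on `U`, via `e^I ↦ dz^I`), the isomorphism being induced by sending a
cycle `c` to the restriction to the diagonal `ζ = z` of its component in
`K^{-m} ⊗ K^0 ≅ K^{-m}`, i.e. to the family `I ↦ (z ↦ c(I, ∅)(z, z))`
(`|I| = m`); concretely:
(i) a cycle `c ∈ T^{-m}` maps to `0` iff it is a boundary (injectivity of the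
induced map on homology);
(ii) every element of `Λ^m(ℂⁿ) ⊗ O(U)` is the image of some cycle
(surjectivity);
(iii) for `m > n` the homology of `(T^•, d_⊗)` in degree `-m` vanishes: every
cycle is a boundary. -/
theorem statement12 (n : ℕ) (hn : 1 ≤ n)
    (U : Set (Fin n → ℂ)) (hUopen : IsOpen U) (hUconv : Convex ℝ U)
    (hUne : U.Nonempty) :
    (∀ m : ℕ, m ≤ n → ∀ c : Coeff2 n, MemT n U m c →
      (∀ I J : Finset (Fin n), ∀ p ∈ U ×ˢ U, dT n c I J p = 0) →
      ((∀ I : Finset (Fin n), I.card = m → ∀ z ∈ U, c I ∅ (z, z) = 0) ↔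
        (∃ b : Coeff2 n, MemT n U (m + 1) b ∧
          ∀ I J : Finset (Fin n), ∀ p ∈ U ×ˢ U, dT n b I J p = c I J p))) ∧
    (∀ m : ℕ, m ≤ n →
      ∀ g : Finset (Fin n) → (Fin n → ℂ) → ℂ,
        (∀ I : Finset (Fin n), DifferentiableOn ℂ (g I) U) →
        ∃ c : Coeff2 n, MemT n U m c ∧
          (∀ I J : Finset (Fin n), ∀ p ∈ U ×ˢ U, dT n c I J p = 0) ∧
          ∀ I : Finset (Fin n), I.card = m → ∀ z ∈ U, c I ∅ (z, z) = g I z) ∧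
    (∀ m : ℕ, n < m → ∀ c : Coeff2 n, MemT n U m c →
      (∀ I J : Finset (Fin n), ∀ p ∈ U ×ˢ U, dT n c I J p = 0) →
      ∃ b : Coeff2 n, MemT n U (m + 1) b ∧
        ∀ I J : Finset (Fin n), ∀ p ∈ U ×ˢ U, dT n b I J p = c I J p) := by
  refine ⟨fun m _ c hc hcl => ⟨fun h => ?_, ?_⟩, fun m _ g hg => ?_, fun m hm c hc hcl => ?_⟩
  · obtain ⟨b, hb, hb', _⟩ := main_exact n hUopen hUconv m c hc hcl h
    exact ⟨b, hb, hb'⟩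
  · rintro ⟨b, _, hb⟩ I _ z hz
    rw [← hb I ∅ (z, z) ⟨hz, hz⟩, dT_diag]
  · set c₀ : Coeff2 n := fun I J p => if J = ∅ ∧ I.card = m then g I p.1 else 0 with hc₀
    have hM : MemT n U m c₀ := by
      refine ⟨fun I J h => ?_, fun I J => ?_⟩
      · have : ¬ (J = ∅ ∧ I.card = m) := by
          rintro ⟨rfl, h2⟩
          exact h (by simpa using h2)
        funext p
        simp only [hc₀, if_neg this]
        rfl
      · by_cases h : J = ∅ ∧ I.card = m
        · simp only [hc₀, if_pos h]
          exact (hg I).comp differentiableOn_fst (fun p hp => hp.1)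
        · simp only [hc₀, if_neg h]
          exact differentiableOn_const 0
    have hg₀ : ∀ I : Finset (Fin n), I.card = m → ∀ z ∈ U, c₀ I ∅ (z, z) = g I z := by
      intro I hI z _
      simp [hc₀, hI]
    rcases Nat.eq_zero_or_pos m with h0 | h0
    · refine ⟨c₀, hM, fun I J p _ => ?_, hg₀⟩
      subst h0
      unfold dT
      have h1 : ∀ j ∈ Iᶜ, c₀ (insert j I) J = 0 := fun j hj => hM.1 _ _ (by
        rw [Finset.card_insert_of_notMem (by simpa using hj)]; omega)
      have h2 : ∀ j ∈ Jᶜ, c₀ I (insert j J) = 0 := fun j hj => hM.1 _ _ (by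
        rw [Finset.card_insert_of_notMem (by simpa using hj)]; omega)
      rw [Finset.sum_eq_zero (fun j hj => by rw [h1 j hj]; simp),
        Finset.sum_eq_zero (fun j hj => by rw [h2 j hj]; simp)]
      simp
    · obtain ⟨m, rfl⟩ : ∃ k, m = k + 1 := ⟨m - 1, by omega⟩
      obtain ⟨b, hb, hb', hb0⟩ := main_exact n hUopen hUconv m (dT n c₀) (hM.dT n)
        (fun I J p _ => dT_sq n c₀ I J p) (fun I _ z _ => dT_diag n c₀ I ∅ z)
      refine ⟨c₀ - b, hM.sub n hb, fun I J p hp => ?_, fun I hI z hz => ?_⟩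
      · rw [dT_sub, hb' I J p hp, sub_self]
      · simp only [Pi.sub_apply]
        rw [hb0, hg₀ I hI z hz]
        simp
  · obtain ⟨b, hb, hb', _⟩ := main_exact n hUopen hUconv m c hc hcl (fun I hI => by
      have := Finset.card_le_univ I
      rw [Fintype.card_fin] at this
      omega)
    exact ⟨b, hb, hb'⟩

end TwistedKoszul
end
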